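/- Let f : ℝ^d → ℝ be a differentiable convex function with a global minimizer x⋆ and minimum value f⋆ = f(x⋆). Let x : [0,∞) → ℝ^d be differentiable and satisfy the gradient flow x'(t) = -∇f(x(t)) for all t ≥ 0, with x(0) = x₀. Then for every t > 0, f(x(t)) - f⋆ ≤ ‖x₀ - x⋆‖² / (2t). -/

import Mathlib

open RealInnerProductSpace

/-! Fix a comparison point `y`. Along the flow, `E t = t * (f (x t) - f y) + ‖x t - y‖ ^ 2 / 2` has
derivative `f (x t) + ⟪∇f (x t), y - x t⟫ - f y - t * ‖∇f (x t)‖ ^ 2`, which is nonpositive for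
`t ≥ 0` because `f` lies above its tangent at `x t`. Hence
`t * (f (x t) - f y) ≤ E t ≤ E 0 = ‖x 0 - y‖ ^ 2 / 2`. -/

open Set

theorem add_apply_sub_le_of_convexOn_of_hasFDerivWithinAt {E : Type*} [NormedAddCommGroup E]
    [NormedSpace ℝ E] {s : Set E} {f : E → ℝ} {f' : E →L[ℝ] ℝ} {a b : E} (hconv : ConvexOn ℝ s f)
    (hf : HasFDerivWithinAt f f' s a) (ha : a ∈ s) (hb : b ∈ s) : f a + f' (b - a) ≤ f b := by
  let line : ℝ →ᵃ[ℝ] E := AffineMap.lineMap a b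
  have line_zero : line 0 = a := AffineMap.lineMap_apply_zero a b
  have line_one : line 1 = b := AffineMap.lineMap_apply_one a b
  have hline : HasDerivWithinAt line (b - a) (line ⁻¹' s) 0 :=
    AffineMap.hasDerivWithinAt_lineMap
  have hderiv : HasDerivWithinAt (f ∘ line) (f' (b - a)) (line ⁻¹' s) 0 :=
    hf.comp_hasDerivWithinAt_of_eq 0 hline (mapsTo_preimage line s) line_zero.symm
  have hslope : f' (b - a) ≤ slope (f ∘ line) 0 1 :=
    (hconv.comp_affineMap line).le_slope_of_hasDerivWithinAt
      (by rwa [mem_preimage, line_zero]) (by rwa [mem_preimage, line_one]) one_pos hderiv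
  rw [slope_def_field, sub_zero, div_one, Function.comp_apply, Function.comp_apply, line_zero,
    line_one] at hslope
  linarith

section GradientFlow

variable {F : Type*} [NormedAddCommGroup F] [InnerProductSpace ℝ F]
  {s : Set F} {D : Set ℝ} {f : F → ℝ} {x : ℝ → F} {v y : F} {t : ℝ}

-- `HasFDerivWithinAt f (innerSL ℝ v) s z` says that `v` is a gradient of `f` at `z` within `s`;
-- Mathlib's `HasGradientWithinAt` is only defined in complete spaces.
theorem hasDerivWithinAt_comp_gradient_flow (hf : HasFDerivWithinAt f (innerSL ℝ v) s (x t))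
    (hx : HasDerivWithinAt x (-v) D t) (hxs : MapsTo x D s) :
    HasDerivWithinAt (fun τ ↦ f (x τ)) (-‖v‖ ^ 2) D t := by
  refine (hf.comp_hasDerivWithinAt t hx hxs).congr_deriv ?_
  rw [innerSL_apply_apply, inner_neg_right, real_inner_self_eq_norm_sq]

theorem hasDerivWithinAt_norm_sub_sq_div_two {x' : F} (hx : HasDerivWithinAt x x' D t) (y : F) :
    HasDerivWithinAt (fun τ ↦ ‖x τ - y‖ ^ 2 / 2) ⟪x t - y, x'⟫ D t :=
  ((hx.sub_const y).norm_sq.div_const 2).congr_deriv (mul_div_cancel_left₀ _ two_ne_zero)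

/-- The Lyapunov function of the gradient flow of `f` along a curve `x`, relative to a comparison
point `y` that need not be a minimizer. The gap in function value is weighted by time, so that
monotonicity yields a decay rate. -/
noncomputable def gradientFlowEnergy (f : F → ℝ) (x : ℝ → F) (y : F) (t : ℝ) : ℝ :=
  t * (f (x t) - f y) + ‖x t - y‖ ^ 2 / 2

theorem hasDerivWithinAt_gradientFlowEnergy (hf : HasFDerivWithinAt f (innerSL ℝ v) s (x t))
    (hx : HasDerivWithinAt x (-v) D t) (hxs : MapsTo x D s) (y : F) :
    HasDerivWithinAt (gradientFlowEnergy f x y)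
      (f (x t) + ⟪v, y - x t⟫ - f y - t * ‖v‖ ^ 2) D t := by
  have hgap := (hasDerivWithinAt_comp_gradient_flow hf hx hxs).sub_const (f y)
  have hdist := hasDerivWithinAt_norm_sub_sq_div_two hx y
  refine (((hasDerivWithinAt_id t D).mul hgap).add hdist).congr_deriv ?_
  rw [inner_neg_right, real_inner_comm, ← inner_neg_right, neg_sub, id_eq]
  ring

variable {g : F → F}

theorem antitoneOn_gradientFlowEnergy (hconv : ConvexOn ℝ s f)
    (hg : ∀ z ∈ s, HasFDerivWithinAt f (innerSL ℝ (g z)) s z)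
    (hflow : ∀ t ∈ Ici 0, HasDerivWithinAt x (-g (x t)) (Ici 0) t) (hxs : MapsTo x (Ici 0) s)
    (hy : y ∈ s) : AntitoneOn (gradientFlowEnergy f x y) (Ici 0) := by
  have hderiv (t : ℝ) (ht : t ∈ Ici 0) :=
    hasDerivWithinAt_gradientFlowEnergy (hg _ (hxs ht)) (hflow t ht) hxs y
  refine antitoneOn_of_hasDerivWithinAt_nonpos (convex_Ici 0)
    (fun t ht ↦ (hderiv t ht).continuousWithinAt)
    (fun t ht ↦ (hderiv t (interior_subset ht)).mono interior_subset) fun t ht ↦ ?_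
  have ht₀ : t ∈ Ici 0 := interior_subset ht
  have htangent : f (x t) + ⟪g (x t), y - x t⟫ ≤ f y :=
    add_apply_sub_le_of_convexOn_of_hasFDerivWithinAt hconv (hg _ (hxs ht₀)) (hxs ht₀) hy
  have hdissipation : 0 ≤ t * ‖g (x t)‖ ^ 2 := mul_nonneg ht₀ (sq_nonneg _)
  linarith

theorem gradient_flow_convex_rate_general (hconv : ConvexOn ℝ s f)
    (hg : ∀ z ∈ s, HasFDerivWithinAt f (innerSL ℝ (g z)) s z)
    (hflow : ∀ t ∈ Ici 0, HasDerivWithinAt x (-g (x t)) (Ici 0) t) (hxs : MapsTo x (Ici 0) s)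
    (hy : y ∈ s) (ht : 0 < t) : f (x t) - f y ≤ ‖x 0 - y‖ ^ 2 / (2 * t) := by
  have henergy : gradientFlowEnergy f x y t ≤ gradientFlowEnergy f x y 0 :=
    antitoneOn_gradientFlowEnergy hconv hg hflow hxs hy self_mem_Ici ht.le ht.le
  have hgap : t * (f (x t) - f y) ≤ ‖x 0 - y‖ ^ 2 / 2 := calc
    t * (f (x t) - f y) ≤ gradientFlowEnergy f x y t :=
      le_add_of_nonneg_right (by positivity)
    _ ≤ gradientFlowEnergy f x y 0 := henergy
    _ = ‖x 0 - y‖ ^ 2 / 2 := by rw [gradientFlowEnergy, zero_mul, zero_add]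
  rwa [← div_div, le_div_iff₀' ht]

end GradientFlow

/-- Convergence rate of the continuous gradient flow for convex objectives:
`f(x(t)) - f⋆ ≤ ‖x₀ - x⋆‖² / (2t)`. -/
theorem gradient_flow_convex_rate {d : ℕ}
    (f : EuclideanSpace ℝ (Fin d) → ℝ)
    (hf : Differentiable ℝ f)
    (hconv : ConvexOn ℝ Set.univ f)
    (xstar x₀ : EuclideanSpace ℝ (Fin d))
    (hmin : ∀ y, f xstar ≤ f y)
    (x : ℝ → EuclideanSpace ℝ (Fin d))
    (hflow : ∀ t ≥ (0 : ℝ), HasDerivAt x (-gradient f (x t)) t)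
    (hx0 : x 0 = x₀) :
    ∀ t > (0 : ℝ), f (x t) - f xstar ≤ ‖x₀ - xstar‖ ^ 2 / (2 * t) := by
  subst hx0
  exact fun t ht ↦ gradient_flow_convex_rate_general hconv
    (fun z _ ↦ (hf z).hasGradientAt.hasFDerivAt.hasFDerivWithinAt)
    (fun t ht ↦ (hflow t ht).hasDerivWithinAt) (mapsTo_univ x _) (mem_univ xstar) ht
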